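/- arXiv:math/9903094 — 2 statements merged into one kernel-verified Lean document; each statement's English description precedes it below -/
import Mathlib

section
/- Suppose every transitive ordered factorisation of any π ∈ S_n into transpositions has at least n + κ(π) − 2 factors, with equality achievable. Then for k ≥ 2, any minimal transitive ordered factorisation of π ∈ S_n into k-cycles has exactly (n + κ(π) − 2)/(k−1) factors, provided (k−1) divides n + κ(π) − 2; in particular μ₂([k]) · μ_k(π) = μ₂(cycle type of π), where μ₂([k]) = k − 1. -/
/-- The number of cycles of a permutation of `Fin n`, counting fixed points. -/
def kappa {n : ℕ} (σ : Equiv.Perm (Fin n)) : ℕ :=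
  σ.cycleType.card + (n - σ.support.card)

/-- `L` is a transitive ordered factorisation of `π` into `k`-cycles. -/
def IsTransKFact (n k : ℕ) (L : List (Equiv.Perm (Fin n))) (π : Equiv.Perm (Fin n)) : Prop :=
  (∀ σ ∈ L, σ.IsCycle ∧ σ.support.card = k) ∧ L.prod = π ∧
    ∀ a b : Fin n, ∃ g ∈ Subgroup.closure {σ | σ ∈ L}, g a = b

open Equiv Equiv.Perm in
theorem aux_split {α : Type*} [DecidableEq α] (X : List α) (b : α) (Y : List α) :
    List.formPerm (X ++ b :: Y) = List.formPerm (X ++ [b]) * List.formPerm (b :: Y) := by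
  induction X with
  | nil => simp
  | cons x X ih =>
    cases X with
    | nil => simp
    | cons y X =>
      simp only [List.cons_append, List.formPerm_cons_cons] at ih ⊢
      rw [ih, mul_assoc]

theorem aux_comm {α : Type*} [DecidableEq α] (l l' : List α) (h : l.Disjoint l') :
    List.formPerm l * List.formPerm l' = List.formPerm l' * List.formPerm l := by
  apply Equiv.Perm.Disjoint.commute
  intro x
  by_cases hx : x ∈ l
  · right
    exact List.formPerm_apply_of_notMem (fun h' => h hx h')
  · left
    exact List.formPerm_apply_of_notMem hx

theorem aux_step {α : Type*} [DecidableEq α] (a a' : α) (A B : List α)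
    (h : (B ++ a :: A).Nodup) (h' : a' ∉ B ++ a :: A) :
    List.formPerm (B ++ a :: A) =
      List.formPerm (a' :: (B ++ [a])) * List.formPerm (a :: A ++ [a']) := by
  have e1 : List.formPerm (a :: A ++ [a']) = Equiv.swap a' a * List.formPerm (a :: A) := by
    rw [← List.formPerm_cons_cons]
    have := List.formPerm_rotate_one (a' :: a :: A) (by
      simp only [List.nodup_cons, List.nodup_append, List.mem_append, List.mem_cons] at *
      tauto)
    simpa using this
  have e2 : List.formPerm (a' :: (B ++ [a])) = List.formPerm (B ++ [a]) * Equiv.swap a a' := by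
    have := List.formPerm_rotate_one (a' :: (B ++ [a])) (by
      simp only [List.nodup_cons, List.nodup_append, List.mem_append, List.mem_cons] at *
      simp
      grind)
    rw [← this]
    simp only [List.rotate_cons_succ, List.rotate_zero, List.append_assoc, List.singleton_append]
    rw [aux_split]
    simp
  rw [e1, e2, aux_split, Equiv.swap_comm a' a, mul_assoc, Equiv.swap_mul_self_mul]

theorem aux_cut {α : Type*} (l : List α) (j : ℕ) (hj : j < l.length) :
    ∃ B a A, l = B ++ a :: A ∧ B.length = j := by
  refine ⟨l.take j, l[j], l.drop (j+1), ?_, ?_⟩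
  · simp
  · simp; omega

theorem aux_len {α : Type*} (ls : List (List α)) (h : ∀ l ∈ ls, l ≠ []) :
    ls.length ≤ ls.flatten.length := by
  induction ls with
  | nil => simp
  | cons l ls ih =>
    have := ih (fun l hl => h l (by simp [hl]))
    have := List.length_pos_iff.2 (h l (by simp))
    simp only [List.flatten_cons, List.length_append, List.length_cons]
    omega

theorem aux_key {α : Type*} [DecidableEq α] (ls : List (List α)) (hls : ls ≠ [])
    (hne : ∀ l ∈ ls, l ≠ []) (hnd : ls.flatten.Nodup) (k : ℕ) (hk1 : ls.length ≤ k)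
    (hk2 : k ≤ ls.flatten.length) :
    ∃ a X Y, (ls.map List.formPerm).prod = List.formPerm (X ++ [a]) * List.formPerm (a :: Y) ∧
      (X ++ [a]).length = k ∧ (X ++ [a]).Nodup ∧ (a :: Y).Nodup ∧
      (∀ x, x ∈ ls.flatten ↔ x ∈ X ++ [a] ∨ x ∈ a :: Y) ∧
      k + (a :: Y).length = ls.flatten.length + ls.length := by
  induction ls generalizing k with
  | nil => exact absurd rfl hls
  | cons l ls ih =>
    have hl := List.length_pos_iff.2 (hne l (by simp))
    by_cases h0 : ls = []
    · subst h0
      simp only [List.length_cons, List.length_nil, List.flatten_cons, List.flatten_nil,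
        List.append_nil] at hk1 hk2 hnd
      obtain ⟨B, a, A, rfl, hB⟩ := aux_cut l (k - 1) (by omega)
      refine ⟨a, B, A, ?_, ?_, ?_, ?_, ?_, ?_⟩
      · simp [aux_split B a A]
      · simp; omega
      · simp only [List.nodup_cons, List.nodup_append, List.mem_cons] at *
        simp; grind
      · exact (List.nodup_append.1 hnd).2.1
      · intro x; simp; tauto
      · simp; omega
    · simp only [List.length_cons, List.flatten_cons, List.length_append] at hk1 hk2 hnd
      have hlen := aux_len ls (fun l hl => hne l (by simp [hl]))
      obtain ⟨j, hj1, hj2, hj3, hj4⟩ : ∃ j, j < l.length ∧ j + 1 ≤ k ∧ ls.length ≤ k - (j+1) ∧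
          k - (j+1) ≤ ls.flatten.length := by
        refine ⟨min (l.length - 1) (k - 1 - ls.length), ?_, ?_, ?_, ?_⟩ <;> omega
      obtain ⟨a', X, Y, h1, h2, h3, h4, h5, h6⟩ := ih h0 (fun l hl => hne l (by simp [hl]))
        (List.nodup_append.1 hnd).2.1 (k - (j+1)) hj3 hj4
      obtain ⟨B, a, A, rfl, hB⟩ := aux_cut l j hj1
      have hd := (List.nodup_append.1 hnd).2.2
      have hl' := (List.nodup_append.1 hnd).1
      have hdX : ∀ x ∈ X ++ [a'], x ∉ B ++ a :: A := fun x hx hx' =>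
        hd x hx' x ((h5 x).2 (Or.inl hx)) rfl
      have hdY : ∀ x ∈ a' :: Y, x ∉ B ++ a :: A := fun x hx hx' =>
        hd x hx' x ((h5 x).2 (Or.inr hx)) rfl
      refine ⟨a, X ++ a' :: B, A ++ a' :: Y, ?_, ?_, ?_, ?_, ?_, ?_⟩
      · rw [List.map_cons, List.prod_cons, h1, ← mul_assoc,
          aux_comm _ _ (fun x hx hx' => hdX x hx' hx),
          aux_step a a' A B hl' (hdX a' (by simp))]
        have e1 : X ++ a' :: B ++ [a] = X ++ a' :: (B ++ [a]) := by simp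
        have e2 : a :: (A ++ a' :: Y) = (a :: A) ++ a' :: Y := by simp
        rw [e1, e2, aux_split X a' (B ++ [a]), aux_split (a :: A) a' Y]
        simp only [mul_assoc]
      · simp at h2 ⊢; omega
      · have : X ++ a' :: B ++ [a] = (X ++ [a']) ++ (B ++ [a]) := by simp
        rw [this, List.nodup_append]
        refine ⟨h3, ?_, ?_⟩
        · have : B ++ a :: A = (B ++ [a]) ++ A := by simp
          rw [this] at hl'
          exact (List.nodup_append.1 hl').1
        · rintro x hx y hy rfl
          apply hdX x hx
          simp at hy ⊢; tauto
      · have : a :: (A ++ a' :: Y) = (a :: A) ++ (a' :: Y) := by simp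
        rw [this, List.nodup_append]
        refine ⟨(List.nodup_append.1 hl').2.1, h4, ?_⟩
        rintro x hx y hy rfl
        exact hdY x hy (List.mem_append_right _ hx)
      · intro x
        rw [List.flatten_cons, List.mem_append, h5 x]
        clear * -
        simp only [List.mem_append, List.mem_cons, List.not_mem_nil]
        grind
      · simp at h6 ⊢; omega

theorem aux_main {α : Type*} [DecidableEq α] [Fintype α] (k : ℕ) (hk : 2 ≤ k) (m : ℕ) :
    ∀ (ls : List (List α)), ls ≠ [] → (∀ l ∈ ls, l ≠ []) → ls.flatten.Nodup →
      ls.flatten.length + ls.length = m * (k - 1) + 2 → (m ≠ 0 → k ≤ ls.flatten.length) →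
      ∃ L : List (Equiv.Perm α), (∀ σ ∈ L, σ.IsCycle ∧ σ.support.card = k) ∧
        L.prod = (ls.map List.formPerm).prod ∧ L.length = m ∧
        ∀ a ∈ ls.flatten, ∀ b ∈ ls.flatten, ∃ g ∈ Subgroup.closure {σ | σ ∈ L}, g a = b := by
  induction m with
  | zero =>
    intro ls h0 hne hnd hsum _
    have h1 := aux_len ls hne
    have h2 := List.length_pos_iff.2 h0
    obtain ⟨l, rfl⟩ := List.length_eq_one_iff.1 (by omega : ls.length = 1)
    simp at hsum
    obtain ⟨x, rfl⟩ := List.length_eq_one_iff.1 (by omega : l.length = 1)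
    refine ⟨[], by simp, by simp, rfl, ?_⟩
    intro a ha b hb
    simp at ha hb
    exact ⟨1, one_mem _, by simp [ha, hb]⟩
  | succ m ih =>
    intro ls h0 hne hnd hsum hkn
    have hkn := hkn (by omega)
    have hmk : (m + 1) * (k - 1) = m * (k - 1) + (k - 1) := by ring
    obtain ⟨ls1, ls2, rfl, hn1, hlk, hkl, hcase⟩ : ∃ ls1 ls2, ls = ls1 ++ ls2 ∧ ls1 ≠ [] ∧
        ls1.length ≤ k ∧ k ≤ ls1.flatten.length ∧ (ls2 = [] ∨ ls1.length = k) := by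
      by_cases hc : ls.length ≤ k
      · exact ⟨ls, [], by simp, h0, hc, hkn, Or.inl rfl⟩
      · have hl : (ls.take k).length = k := by simp; omega
        refine ⟨ls.take k, ls.drop k, by simp, ?_, by omega, ?_, Or.inr hl⟩
        · intro h
          rw [h] at hl
          simp at hl; omega
        · have := aux_len (ls.take k) (fun l hl => hne l (List.mem_of_mem_take hl))
          omega
    rw [List.flatten_append] at hnd
    have hnd' := List.nodup_append.1 hnd
    obtain ⟨a, X, Y, g1, g2, g3, g4, g5, g6⟩ := aux_key ls1 hn1
      (fun l hl => hne l (by simp [hl])) hnd'.1 k hlk hkl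
    simp only [List.flatten_append, List.length_append] at hsum hkn
    obtain ⟨L, i1, i2, i3, i4⟩ := ih ((a :: Y) :: ls2) (by simp) (by
        intro l hl
        rcases List.mem_cons.1 hl with rfl | hl
        · simp
        · exact hne l (by simp [hl])) (by
        rw [List.flatten_cons, List.nodup_append]
        refine ⟨g4, hnd'.2.1, ?_⟩
        intro x hx y hy
        exact hnd'.2.2 x ((g5 x).2 (Or.inr hx)) y hy) (by
        rw [List.flatten_cons, List.length_append, List.length_cons (as := ls2)]
        omega) (by
        intro hm
        rw [List.flatten_cons, List.length_append]
        rcases hcase with rfl | hc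
        · simp at hsum ⊢
          simp at g6
          have : k - 1 ≤ m * (k - 1) := Nat.le_mul_of_pos_left _ (by omega)
          omega
        · omega)
    have hcyc : (List.formPerm (X ++ [a])).IsCycle := List.isCycle_formPerm g3 (by omega)
    have hsupp : (List.formPerm (X ++ [a])).support = (X ++ [a]).toFinset := by
      apply List.support_formPerm_of_nodup _ g3
      intro x hx
      rw [hx] at g2
      simp at g2; omega
    refine ⟨List.formPerm (X ++ [a]) :: L, ?_, ?_, by simp [i3], ?_⟩
    · intro σ hσ
      rcases List.mem_cons.1 hσ with rfl | hσ
      · refine ⟨hcyc, ?_⟩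
        rw [hsupp, List.toFinset_card_of_nodup g3, g2]
      · exact i1 σ hσ
    · rw [List.prod_cons, i2, List.map_append, List.prod_append, g1, List.map_cons,
        List.prod_cons, mul_assoc]
    · have hub : ∀ x ∈ (ls1 ++ ls2).flatten,
          ∃ g ∈ Subgroup.closure {σ | σ ∈ List.formPerm (X ++ [a]) :: L}, g a = x := by
        intro x hx
        by_cases hxX : x ∈ X ++ [a]
        · obtain ⟨i, hi⟩ := hcyc.exists_zpow_eq
            (x := a) (y := x) (Equiv.Perm.mem_support.1 (by rw [hsupp]; simp))
            (Equiv.Perm.mem_support.1 (by rw [hsupp]; exact List.mem_toFinset.2 hxX))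
          exact ⟨_, Subgroup.zpow_mem _ (Subgroup.subset_closure (by simp)) i, hi⟩
        · obtain ⟨g, hg, hgx⟩ := i4 a (by simp) x (by
            rw [List.flatten_append, List.mem_append, g5] at hx
            rw [List.flatten_cons, List.mem_append]
            tauto)
          refine ⟨g, Subgroup.closure_mono ?_ hg, hgx⟩
          intro σ hσ
          exact List.mem_cons_of_mem _ hσ
      intro x hx y hy
      obtain ⟨g, hg, rfl⟩ := hub x hx
      obtain ⟨h, hh, rfl⟩ := hub y hy
      exact ⟨h * g⁻¹, mul_mem hh (inv_mem hg), by simp⟩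

theorem aux_cycle {α : Type*} [DecidableEq α] [Fintype α] (σ : Equiv.Perm α) (h : σ.IsCycle) :
    ∃ l : List α, l.Nodup ∧ l.formPerm = σ ∧ l.toFinset = σ.support ∧
      l.length = σ.support.card ∧ l ≠ [] := by
  obtain ⟨x, hx, hx'⟩ := h
  have hc : σ.IsCycle := ⟨x, hx, hx'⟩
  have e := Equiv.Perm.formPerm_toList σ x
  rw [hc.cycleOf_eq hx] at e
  have l1 := Equiv.Perm.length_toList σ x
  rw [hc.cycleOf_eq hx] at l1
  have l2 := Equiv.Perm.nodup_toList σ x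
  have l3 := hc.two_le_card_support
  refine ⟨σ.toList x, l2, e, ?_, l1, ?_⟩
  · rw [← List.support_formPerm_of_nodup _ l2 (Equiv.Perm.toList_ne_singleton σ x), e]
  · intro h; rw [h] at l1; simp at l1; omega

theorem aux_rep {α : Type*} [DecidableEq α] [Fintype α] (π : Equiv.Perm α) :
    ∃ ls : List (List α), (∀ l ∈ ls, l ≠ []) ∧ ls.flatten.Nodup ∧
      (ls.map List.formPerm).prod = π ∧ ls.length = π.cycleType.card ∧
      ∀ x, x ∈ ls.flatten ↔ x ∈ π.support := by
  induction π using Equiv.Perm.cycle_induction_on with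
  | base_one => exact ⟨[], by simp, by simp, by simp, by simp, by simp⟩
  | base_cycles σ h =>
    obtain ⟨l, h1, h2, h3, h4, h5⟩ := aux_cycle σ h
    refine ⟨[l], by simpa using h5, by simpa using h1, by simpa using h2, ?_, ?_⟩
    · simp [h.cycleType]
    · intro x; rw [← h3]; simp
  | induction_disjoint σ τ hd hc h1 h2 =>
    obtain ⟨l, a1, a2, a3, a4, a5⟩ := h1
    obtain ⟨l', b1, b2, b3, b4, b5⟩ := h2
    refine ⟨l ++ l', ?_, ?_, ?_, ?_, ?_⟩
    · intro y hy
      rcases List.mem_append.1 hy with hy | hy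
      · exact a1 y hy
      · exact b1 y hy
    · rw [List.flatten_append, List.nodup_append]
      refine ⟨a2, b2, ?_⟩
      rintro x hx y hy rfl
      exact Finset.disjoint_left.1 hd.disjoint_support ((a5 x).1 hx) ((b5 x).1 hy)
    · rw [List.map_append, List.prod_append, a3, b3]
    · rw [hd.cycleType_mul]; simp [a4, b4]
    · intro x
      rw [List.flatten_append, List.mem_append, a5, b5, hd.support_mul, Finset.mem_union]

theorem aux_rep' {n : ℕ} (π : Equiv.Perm (Fin n)) :
    ∃ ls : List (List (Fin n)), (∀ l ∈ ls, l ≠ []) ∧ ls.flatten.Nodup ∧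
      (ls.map List.formPerm).prod = π ∧ ls.length = kappa π ∧ ls.flatten.length = n ∧
      ∀ x, x ∈ ls.flatten := by
  obtain ⟨ls, h1, h2, h3, h4, h5⟩ := aux_rep π
  have hfl : ∀ l : List (Fin n), (l.map (fun x => [x])).flatten = l := by
    intro l
    induction l with
    | nil => rfl
    | cons a l ih => simp [ih]
  have hpr : ∀ l : List (Fin n), ((l.map (fun x => [x])).map List.formPerm).prod = 1 := by
    intro l
    induction l with
    | nil => rfl
    | cons a l ih =>
      rw [List.map_cons, List.map_cons, List.prod_cons, ih, List.formPerm_singleton, one_mul]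
  have hnd : (ls ++ (π.supportᶜ.toList.map (fun x => [x]))).flatten.Nodup := by
    rw [List.flatten_append, hfl, List.nodup_append]
    refine ⟨h2, Finset.nodup_toList _, ?_⟩
    rintro x hx y hy rfl
    rw [Finset.mem_toList, Finset.mem_compl] at hy
    exact hy ((h5 x).1 hx)
  have hall : ∀ x, x ∈ (ls ++ (π.supportᶜ.toList.map (fun x => [x]))).flatten := by
    intro x
    rw [List.flatten_append, hfl, List.mem_append, h5, Finset.mem_toList, Finset.mem_compl]
    tauto
  refine ⟨_, ?_, hnd, ?_, ?_, ?_, hall⟩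
  · intro l hl
    rcases List.mem_append.1 hl with hl | hl
    · exact h1 l hl
    · obtain ⟨x, _, rfl⟩ := List.mem_map.1 hl
      simp
  · rw [List.map_append, List.prod_append, hpr, h3, mul_one]
  · rw [List.length_append, List.length_map, h4, Finset.length_toList, Finset.card_compl]
    simp [kappa]
  · rw [← List.toFinset_card_of_nodup hnd]
    have : (ls ++ (π.supportᶜ.toList.map (fun x => [x]))).flatten.toFinset = Finset.univ := by
      ext x
      simpa only [List.mem_toFinset, Finset.mem_univ, iff_true] using hall x
    rw [this, Finset.card_univ, Fintype.card_fin]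

theorem aux_trans {α : Type*} [DecidableEq α] [Fintype α] (l : List α) (h : l.Nodup) :
    ∃ S : List (Equiv.Perm α), (∀ σ ∈ S, σ.IsCycle ∧ σ.support.card = 2) ∧
      S.prod = l.formPerm ∧ S.length = l.length - 1 := by
  induction l with
  | nil => exact ⟨[], by simp, by simp, by simp⟩
  | cons x l ih =>
    cases l with
    | nil => exact ⟨[], by simp, by simp, by simp⟩
    | cons y l =>
      obtain ⟨S, h1, h2, h3⟩ := ih (List.nodup_cons.1 h).2
      have hxy : x ≠ y := by
        rintro rfl
        simp at h
      refine ⟨Equiv.swap x y :: S, ?_, ?_, ?_⟩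
      · intro σ hσ
        rcases List.mem_cons.1 hσ with rfl | hσ
        · exact ⟨Equiv.Perm.isCycle_swap hxy, Equiv.Perm.card_support_swap hxy⟩
        · exact h1 σ hσ
      · rw [List.prod_cons, h2, List.formPerm_cons_cons]
      · simp [h3]

theorem aux_refine {α : Type*} [DecidableEq α] [Fintype α] (k : ℕ) (L : List (Equiv.Perm α))
    (h : ∀ σ ∈ L, σ.IsCycle ∧ σ.support.card = k) :
    ∃ S : List (Equiv.Perm α), (∀ σ ∈ S, σ.IsCycle ∧ σ.support.card = 2) ∧
      S.prod = L.prod ∧ S.length = L.length * (k - 1) ∧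
      ∀ σ ∈ L, σ ∈ Subgroup.closure {τ | τ ∈ S} := by
  induction L with
  | nil => exact ⟨[], by simp, by simp, by simp, by simp⟩
  | cons σ L ih =>
    obtain ⟨S, h1, h2, h3, h4⟩ := ih (fun τ hτ => h τ (List.mem_cons_of_mem _ hτ))
    obtain ⟨hc, hcard⟩ := h σ (by simp)
    obtain ⟨l, l1, l2, l3, l4, l5⟩ := aux_cycle σ hc
    obtain ⟨S', g1, g2, g3⟩ := aux_trans l l1
    refine ⟨S' ++ S, ?_, ?_, ?_, ?_⟩
    · intro τ hτ
      rcases List.mem_append.1 hτ with hτ | hτ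
      · exact g1 τ hτ
      · exact h1 τ hτ
    · rw [List.prod_append, List.prod_cons, g2, l2, h2]
    · rw [List.length_append, g3, l4, hcard, h3, List.length_cons]; ring
    · intro τ hτ
      rcases List.mem_cons.1 hτ with rfl | hτ
      · rw [← l2, ← g2]
        apply Subgroup.list_prod_mem
        intro ρ hρ
        exact Subgroup.subset_closure (List.mem_append_left _ hρ)
      · refine Subgroup.closure_mono ?_ (h4 τ hτ)
        intro ρ hρ
        exact List.mem_append_right _ hρ

/-- Assuming the transposition case (`μ₂(π) = n + κ(π) − 2`, lower bound and
achievability), a minimal transitive ordered factorisation of `π` into `k`-cycles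
has exactly `(n + κ(π) − 2)/(k−1)` factors, i.e. its length times `k−1` equals
`n + κ(π) − 2`, provided `k−1` divides `n + κ(π) − 2`. -/
theorem mu_k_formula_from_mu_two (n k : ℕ) (hn : 1 ≤ n) (hk : 2 ≤ k)
    (hlow : ∀ (π : Equiv.Perm (Fin n)) (L : List (Equiv.Perm (Fin n))),
      IsTransKFact n 2 L π → L.length ≥ n + kappa π - 2)
    (hach : ∀ π : Equiv.Perm (Fin n), ∃ L : List (Equiv.Perm (Fin n)),
      IsTransKFact n 2 L π ∧ L.length = n + kappa π - 2)
    (π : Equiv.Perm (Fin n)) (hdvd : (k - 1) ∣ n + kappa π - 2)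
    (L : List (Equiv.Perm (Fin n))) (hL : IsTransKFact n k L π)
    (hmin : ∀ L' : List (Equiv.Perm (Fin n)), IsTransKFact n k L' π → L.length ≤ L'.length) :
    L.length * (k - 1) = n + kappa π - 2 := by
  obtain ⟨c1, c2, c3⟩ := hL
  apply le_antisymm
  · obtain ⟨m, hm⟩ := hdvd
    obtain ⟨ls, h1, h2, h3, h4, h5, h6⟩ := aux_rep' π
    have hlsne : ls ≠ [] := by
      rintro rfl
      simp at h5; omega
    have hpos := List.length_pos_iff.2 hlsne
    have hle := aux_len ls h1
    obtain ⟨L', i1, i2, i3, i4⟩ := aux_main k hk m ls hlsne h1 h2 (by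
      rw [mul_comm, ← hm]; omega) (by
      intro hm0
      rw [h5]
      cases L with
      | cons σ L =>
        rw [← (c1 σ (by simp)).2]
        simpa using Finset.card_le_univ σ.support
      | nil =>
        exfalso
        have hn1 : n ≤ 1 := by
          by_contra hcon
          obtain ⟨g, hg, hgx⟩ := c3 ⟨0, by omega⟩ ⟨1, by omega⟩
          simp at hg
          subst hg
          simp at hgx
        have : 0 < (k - 1) * m := Nat.mul_pos (by omega) (by omega)
        omega)
    have := hmin L' ⟨i1, i2.trans h3, fun a b => i4 a (h6 a) b (h6 b)⟩
    rw [hm, mul_comm, ← i3]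
    exact Nat.mul_le_mul_left _ this
  · obtain ⟨S, s1, s2, s3, s4⟩ := aux_refine k L c1
    rw [← s3]
    apply hlow π S
    refine ⟨s1, s2.trans c2, ?_⟩
    intro a b
    obtain ⟨g, hg, hgx⟩ := c3 a b
    exact ⟨g, (Subgroup.closure_le _).2 (fun σ hσ => s4 σ hσ) hg, hgx⟩
end

section
/- The formal power series w(x) = ∑_{m≥0} (1+(k−1)m)^{m−1}/m! · x^{1+(k−1)m} satisfies the differential equation x·w′(x)·(1 − (k−1)·w(x)^{k−1}) = w(x). -/
open PowerSeries

/-- The explicit series `w(x) = ∑_{m≥0} (1+(k−1)m)^{m−1}/m! · x^{1+(k−1)m}`. -/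
noncomputable def wSeries (k : ℕ) : PowerSeries ℚ :=
  PowerSeries.mk fun n =>
    if 1 ≤ n ∧ (k - 1) ∣ (n - 1) then
      ((n : ℚ) ^ ((((n - 1) / (k - 1) : ℕ) : ℤ) - 1)) / (Nat.factorial ((n - 1) / (k - 1)))
    else 0

lemma abel_fd (s d : ℚ) (n : ℕ) :
    ∑ p ∈ Finset.HasAntidiagonal.antidiagonal (n+1),
      ((s + d * p.1) ^ n / (p.1.factorial : ℚ)) * ((-1) ^ p.2 / (p.2.factorial : ℚ)) = 0 := by
  have hP : (((Polynomial.C s + Polynomial.C d * Polynomial.X) ^ n : Polynomial ℚ)).natDegree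
      < n + 1 := by
    refine Nat.lt_succ_of_le ?_
    refine Polynomial.natDegree_pow_le.trans ?_
    have : (Polynomial.C s + Polynomial.C d * Polynomial.X : Polynomial ℚ).natDegree ≤ 1 := by
      compute_degree
    nlinarith
  have h := congrFun (Polynomial.fwdDiff_iter_eq_zero_of_degree_lt hP) 0
  rw [fwdDiff_iter_eq_sum_shift] at h
  rw [Finset.Nat.sum_antidiagonal_eq_sum_range_succ_mk]
  have hf : ((n+1).factorial : ℚ) ≠ 0 := by positivity
  apply mul_left_cancel₀ hf
  rw [mul_zero, Finset.mul_sum]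
  rw [Pi.zero_apply] at h
  rw [← h]
  refine Finset.sum_congr rfl fun k hk => ?_
  have hk' : k ≤ n + 1 := by simpa [Nat.lt_succ_iff] using hk
  have := Nat.cast_choose ℚ hk'
  simp [zsmul_eq_mul, this]
  field_simp

lemma abel_poly (s d : ℚ) (hs : 0 < s) (hd : 0 ≤ d) (n : ℕ) :
    ∑ p ∈ Finset.HasAntidiagonal.antidiagonal n,
      Polynomial.C (s * (s + d * p.1) ^ ((p.1 : ℤ) - 1) / (p.1.factorial : ℚ)) *
        (Polynomial.C (1 / (p.2.factorial : ℚ)) *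
          (Polynomial.X + Polynomial.C (d * p.2)) ^ p.2)
      = Polynomial.C (1 / (n.factorial : ℚ)) *
          (Polynomial.X + Polynomial.C (s + d * n)) ^ n := by
  induction n with
  | zero => simp [hs.ne']
  | succ n ih =>
    rw [← sub_eq_zero]
    set P := (∑ p ∈ Finset.HasAntidiagonal.antidiagonal (n+1),
      Polynomial.C (s * (s + d * p.1) ^ ((p.1 : ℤ) - 1) / (p.1.factorial : ℚ)) *
        (Polynomial.C (1 / (p.2.factorial : ℚ)) *
          (Polynomial.X + Polynomial.C (d * p.2)) ^ p.2))
      - Polynomial.C (1 / ((n+1).factorial : ℚ)) *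
          (Polynomial.X + Polynomial.C (s + d * (n + 1 : ℕ))) ^ (n+1) with hP
    have key : ∀ (j : ℕ) (c : ℚ), Polynomial.derivative (Polynomial.C (1 / ((j+1).factorial : ℚ)) *
          (Polynomial.X + Polynomial.C c) ^ (j+1)) = Polynomial.C (1 / (j.factorial : ℚ)) *
          (Polynomial.X + Polynomial.C c) ^ j := by
      intro j c
      have h1 : (1 / ((j+1).factorial : ℚ)) * ((j : ℚ) + 1) = 1 / (j.factorial : ℚ) := by
        rw [Nat.factorial_succ]; push_cast; field_simp
      rw [Polynomial.derivative_C_mul, Polynomial.derivative_X_add_C_pow, ← h1]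
      simp [mul_assoc]
    have hder : Polynomial.derivative P = 0 := by
      have ih' := congrArg (fun q => Polynomial.comp q (Polynomial.X + Polynomial.C d)) ih
      simp only [Polynomial.sum_comp, Polynomial.mul_comp, Polynomial.C_comp,
        Polynomial.pow_comp, Polynomial.add_comp, Polynomial.X_comp] at ih'
      rw [hP, Polynomial.derivative_sub, key, Finset.Nat.sum_antidiagonal_succ',
        Polynomial.derivative_add, Polynomial.derivative_sum]
      simp only [Polynomial.derivative_C_mul _ (_ * _), key]
      rw [sub_eq_zero]
      have e : ∀ c : ℚ, ∀ j : ℕ, (Polynomial.X + Polynomial.C (c + d * (j+1 : ℕ)) : Polynomial ℚ)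
          = Polynomial.X + Polynomial.C d + Polynomial.C (c + d * j) := by
        intro c j
        rw [add_assoc, ← Polynomial.C_add]; congr 2; push_cast; ring
      have e0 : ∀ j : ℕ, (Polynomial.X + Polynomial.C (d * (j+1 : ℕ)) : Polynomial ℚ)
          = Polynomial.X + Polynomial.C d + Polynomial.C (d * j) := by
        intro j; simpa using e 0 j
      simp only [e, e0, ih']
      simp
    have hev : Polynomial.eval (-(s + d * (n + 1 : ℕ))) P = 0 := by
      rw [hP]
      simp only [Polynomial.eval_sub, Polynomial.eval_finsetSum, Polynomial.eval_mul,
        Polynomial.eval_C, Polynomial.eval_pow, Polynomial.eval_add, Polynomial.eval_X]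
      rw [neg_add_cancel, zero_pow (Nat.succ_ne_zero n), mul_zero, sub_zero]
      have h := abel_fd s d n
      rw [← mul_zero s, ← h, Finset.mul_sum]
      refine Finset.sum_congr rfl fun p hp => ?_
      obtain ⟨i, j⟩ := p
      simp only [Finset.HasAntidiagonal.mem_antidiagonal] at hp
      have hpos : (0:ℚ) < s + d * i := by positivity
      have e1 : -(s + d * (n + 1 : ℕ)) + d * j = (-1) * (s + d * i) := by
        rw [← hp]; push_cast; ring
      have e2 : (s + d * i) ^ n = (s + d * i) ^ ((i : ℤ) - 1) * (s + d * i) ^ j := by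
        rw [← zpow_natCast, ← zpow_natCast (s + d * i) j, ← zpow_add₀ hpos.ne']
        congr 1; omega
      simp only
      rw [e1, mul_pow, e2]
      ring
    have hC := Polynomial.eq_C_of_derivative_eq_zero hder
    rw [hC, Polynomial.eval_C] at hev
    rw [hC, hev, Polynomial.C_0]

noncomputable def serA (d s : ℚ) : PowerSeries ℚ :=
  PowerSeries.mk fun n => s * (s + d * n) ^ ((n : ℤ) - 1) / (n.factorial : ℚ)

noncomputable def serB (d r : ℚ) : PowerSeries ℚ :=
  PowerSeries.mk fun n => 1 / (n.factorial : ℚ) * (r + d * n) ^ n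

lemma serA_mul_serB (d s r : ℚ) (hs : 0 < s) (hd : 0 ≤ d) :
    serA d s * serB d r = serB d (r + s) := by
  ext n
  have h := congrArg (Polynomial.eval r) (abel_poly s d hs hd n)
  simp only [Polynomial.eval_finsetSum, Polynomial.eval_mul,
        Polynomial.eval_C, Polynomial.eval_pow, Polynomial.eval_add, Polynomial.eval_X] at h
  rw [PowerSeries.coeff_mul]
  simp only [serA, serB, PowerSeries.coeff_mk]
  rw [h, add_assoc]

lemma serB_ne (d r : ℚ) : serB d r ≠ 0 := by
  intro h
  have := congrArg (PowerSeries.coeff 0) h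
  simp [serB] at this

lemma serA_pow (d : ℚ) (hd : 0 ≤ d) (n : ℕ) : serA d 1 ^ (n+1) = serA d (n+1 : ℕ) := by
  induction n with
  | zero => simp
  | succ n ih =>
    rw [pow_succ, ih]
    apply mul_right_cancel₀ (serB_ne d 1)
    rw [mul_assoc, serA_mul_serB _ _ _ one_pos hd, serA_mul_serB _ _ _ (by positivity) hd,
      serA_mul_serB _ _ _ (by positivity) hd]
    congr 1; push_cast; ring

lemma ser_main (d : ℕ) (hd : d ≠ 0) :
    serB d 1 * (1 - (d : PowerSeries ℚ) * (PowerSeries.X * serA d 1 ^ d)) = serA d 1 := by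
  have h1 : serA d 1 ^ d = serA d d := by
    obtain ⟨e, rfl⟩ := Nat.exists_eq_succ_of_ne_zero hd
    exact serA_pow _ (by positivity) e
  have h2 : serA d d * serB d 1 = serB d (1 + d) :=
    serA_mul_serB _ _ _ (by positivity) (by positivity)
  have h3 : serB d 1 * (1 - (d : PowerSeries ℚ) * (PowerSeries.X * serA d 1 ^ d))
      = serB d 1 - PowerSeries.C (d : ℚ) * (PowerSeries.X * serB d (1+d)) := by
    rw [h1, ← h2, map_natCast]; ring
  rw [h3]
  ext n
  rw [map_sub, PowerSeries.coeff_C_mul]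
  cases n with
  | zero => simp [serA, serB]
  | succ n =>
    rw [PowerSeries.coeff_succ_X_mul]
    simp only [serA, serB, PowerSeries.coeff_mk]
    rw [Nat.factorial_succ]
    have : ((n + 1 : ℕ) : ℤ) - 1 = (n : ℤ) := by push_cast; ring
    rw [this, zpow_natCast]
    have e : (1 + (d:ℚ) + d * n) = 1 + d * (n + 1 : ℕ) := by push_cast; ring
    rw [e, pow_succ]
    push_cast
    field_simp
    ring

lemma wSeries_eq (d : ℕ) (hd : d ≠ 0) :
    wSeries (d + 1) = PowerSeries.X * PowerSeries.expand d hd (serA d 1) := by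
  ext n
  cases n with
  | zero => simp [wSeries]
  | succ n =>
    rw [PowerSeries.coeff_succ_X_mul, PowerSeries.coeff_expand]
    simp only [wSeries, PowerSeries.coeff_mk, serA, Nat.add_sub_cancel]
    by_cases h : d ∣ n
    · obtain ⟨m, rfl⟩ := h
      simp [Nat.mul_div_cancel_left m (Nat.pos_of_ne_zero hd), add_comm]
    · simp [h]

lemma wSeries_der (d : ℕ) (hd : d ≠ 0) :
    PowerSeries.X * (wSeries (d + 1)).derivativeFun
      = PowerSeries.X * PowerSeries.expand d hd (serB d 1) := by
  ext n
  cases n with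
  | zero => simp
  | succ n =>
    rw [PowerSeries.coeff_succ_X_mul, PowerSeries.coeff_succ_X_mul, PowerSeries.coeff_expand,
      show (wSeries (d+1)).derivativeFun = PowerSeries.derivative ℚ (wSeries (d+1)) from rfl,
      PowerSeries.coeff_derivative, wSeries_eq d hd, PowerSeries.coeff_succ_X_mul,
      PowerSeries.coeff_expand]
    by_cases h : d ∣ n
    · obtain ⟨m, rfl⟩ := h
      simp only [dvd_mul_right, if_true, Nat.mul_div_cancel_left m (Nat.pos_of_ne_zero hd),
        serA, serB, PowerSeries.coeff_mk]
      have hpos : (0:ℚ) < 1 + d * m := by positivity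
      rw [zpow_sub_one₀ hpos.ne', zpow_natCast]
      push_cast
      field_simp
      ring
    · simp [h]

/-- The explicit series `w` satisfies `x·w′·(1 − (k−1)·w^{k−1}) = w`. -/
theorem wSeries_satisfies_ode (k : ℕ) (hk : 2 ≤ k) :
    PowerSeries.X * (wSeries k).derivativeFun *
        (1 - ((k - 1 : ℕ) : PowerSeries ℚ) * (wSeries k) ^ (k - 1)) = wSeries k := by
  obtain ⟨d, rfl⟩ : ∃ d, k = d + 1 := ⟨k - 1, by omega⟩
  have hd : d ≠ 0 := by omega
  rw [Nat.add_sub_cancel, wSeries_der d hd, wSeries_eq d hd]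
  have h := congrArg (PowerSeries.expand d hd) (ser_main d hd)
  simp only [map_mul, map_sub, map_one, map_natCast, map_pow, PowerSeries.expand_X] at h
  rw [mul_pow, mul_assoc, h]
end
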